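/- Fix 0 < T < ∞, α ∈ (1,2], δ ∈ [0, (α−1)/2), t₀ ∈ (0,T] and ε ∈ (0, (α−1−2δ)/(2α)). Then there exists a constant C (depending on α, δ, ε, t₀) such that for every t ∈ [t₀, T] and every v with |v|_{H^{−α/2}_2} < ∞, one has |(e^{−A^{α/2} t} − e^{−A^{α/2} t₀}) v|_{C^δ} ≤ C · |t − t₀|^{(α−1−2δ)/(2α) − ε} · |v|_{H^{−α/2}_2}. -/

import Mathlib

/-!
Since `t₀ > 0`, the factor `exp (-λ t₀)` with `λ = ((k+1)π)^α` dominates every polynomial in the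
frequency `μ = (k+1)π`, so no sharp summation is needed. For `s = t - t₀ ≥ 0` and `γ ∈ [0,1]`,
`|exp (-λ t) - exp (-λ t₀)| ≤ exp (-λ t₀) (λ s)^γ` (`abs_exp_sub_exp_le`), and finiteness of the
`H^{-α/2}` norm bounds each single coefficient by `μ` times that norm (`abs_fco_le`). Using
`μ ≤ λ ≤ μ²`, the `k`-th coefficient of the difference, multiplied by one further factor `μ`, is at
most `μ⁴ exp (-μ t₀) s^γ ‖v‖` (`abs_coeff_le`), which is summable. That further `μ` pays for the
Lipschitz constant of `sineEig k`, and on `[0,1]` a Lipschitz bound implies the `δ`-Hölder bound.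
-/

open Real MeasureTheory Set

noncomputable section

/-- `sineEig k` is the eigenfunction `e_{k+1}(x) = √2 sin((k+1)πx)` (0-based indexing). -/
def sineEig (k : ℕ) (x : ℝ) : ℝ := Real.sqrt 2 * Real.sin (((k : ℝ) + 1) * Real.pi * x)

/-- Fourier sine coefficient `⟨v, e_{k+1}⟩ = ∫₀¹ v(x) e_{k+1}(x) dx`. -/
def fco (v : ℝ → ℝ) (k : ℕ) : ℝ := ∫ x in (0:ℝ)..1, v x * sineEig k x

/-- Fractional Dirichlet heat semigroup `e^{-A^{α/2} t} v`. -/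
def heatSG (α t : ℝ) (v : ℝ → ℝ) (x : ℝ) : ℝ :=
  ∑' k : ℕ, Real.exp (-(((k : ℝ) + 1) * Real.pi) ^ α * t) * fco v k * sineEig k x

/-- Spectral Sobolev `H^β₂(0,1)` norm. -/
def hNorm (β : ℝ) (v : ℝ → ℝ) : ℝ :=
  Real.sqrt (∑' k : ℕ, (((k : ℝ) + 1) * Real.pi) ^ (2 * β) * fco v k ^ 2)

/-- Membership in `H^β₂(0,1)` (finiteness of the spectral norm). -/
def memH (β : ℝ) (v : ℝ → ℝ) : Prop :=
  Summable fun k : ℕ => (((k : ℝ) + 1) * Real.pi) ^ (2 * β) * fco v k ^ 2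

/-- Supremum norm on `[0,1]`. -/
def supIcc (v : ℝ → ℝ) : ℝ := ⨆ x : Icc (0:ℝ) 1, |v (x : ℝ)|

/-- Hölder seminorm of exponent `δ` on `[0,1]`. -/
def holderSemi (δ : ℝ) (v : ℝ → ℝ) : ℝ :=
  ⨆ p : Icc (0:ℝ) 1 × Icc (0:ℝ) 1,
    |v (p.1 : ℝ) - v (p.2 : ℝ)| / |(p.1 : ℝ) - (p.2 : ℝ)| ^ δ

/-- The `C^δ(0,1)` norm: sup norm plus Hölder seminorm (just the sup norm when `δ = 0`). -/
def cNorm (δ : ℝ) (v : ℝ → ℝ) : ℝ :=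
  if δ = 0 then supIcc v else supIcc v + holderSemi δ v

/-- Membership in `C^δ(0,1)`: continuity plus finite Hölder seminorm. -/
def memC (δ : ℝ) (u : ℝ → ℝ) : Prop :=
  ContinuousOn u (Icc 0 1) ∧
    BddAbove (Set.range fun p : Icc (0:ℝ) 1 × Icc (0:ℝ) 1 =>
      |u (p.1 : ℝ) - u (p.2 : ℝ)| / |(p.1 : ℝ) - (p.2 : ℝ)| ^ δ)

/-- `L^p(0,1)` norm. -/
def lpNorm (p : ℝ) (v : ℝ → ℝ) : ℝ := (∫ x in (0:ℝ)..1, |v x| ^ p) ^ (1 / p)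

/-- Galerkin projection `P_N v` onto the first `N` modes. -/
def galerkin (N : ℕ) (v : ℝ → ℝ) (x : ℝ) : ℝ :=
  ∑ k ∈ Finset.range N, fco v k * sineEig k x

/-- Spectral `H^β₂` norm of `(1 - P_N) v`. -/
def tailHNorm (β : ℝ) (N : ℕ) (v : ℝ → ℝ) : ℝ :=
  Real.sqrt (∑' k : ℕ,
    if k < N then 0 else (((k : ℝ) + 1) * Real.pi) ^ (2 * β) * fco v k ^ 2)

/-- `(1 - P_N) e^{-A^{α/2} t} v`. -/
def tailSG (α t : ℝ) (N : ℕ) (v : ℝ → ℝ) (x : ℝ) : ℝ :=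
  ∑' k : ℕ, if k < N then 0
    else Real.exp (-(((k : ℝ) + 1) * Real.pi) ^ α * t) * fco v k * sineEig k x

/-- Cosine coefficient `∫₀¹ g(x) √2 cos((k+1)πx) dx`. -/
def cco (g : ℝ → ℝ) (k : ℕ) : ℝ :=
  ∫ x in (0:ℝ)..1, g x * (Real.sqrt 2 * Real.cos (((k : ℝ) + 1) * Real.pi * x))

/-- Spectral `H^{-α/2}₂` norm of the distributional derivative `∂ₓ g`. -/
def dxHNorm (α : ℝ) (g : ℝ → ℝ) : ℝ :=
  Real.sqrt (∑' k : ℕ, (((k : ℝ) + 1) * Real.pi) ^ (2 - α) * cco g k ^ 2)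

/-- The frequency `(k+1)π` of the eigenfunction `sineEig k`. -/
def freq (k : ℕ) : ℝ := ((k : ℝ) + 1) * Real.pi

lemma one_le_freq (k : ℕ) : 1 ≤ freq k := by
  have hk : (0:ℝ) ≤ k := Nat.cast_nonneg k
  unfold freq
  nlinarith [Real.pi_gt_three]

lemma abs_sineEig_le (k : ℕ) (x : ℝ) : |sineEig k x| ≤ Real.sqrt 2 := by
  unfold sineEig
  rw [abs_mul, abs_of_nonneg (Real.sqrt_nonneg 2)]
  exact mul_le_of_le_one_right (Real.sqrt_nonneg 2) (Real.abs_sin_le_one _)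

lemma abs_sineEig_sub_le (k : ℕ) (x y : ℝ) :
    |sineEig k x - sineEig k y| ≤ Real.sqrt 2 * (freq k * |x - y|) := by
  have hμ : 0 ≤ freq k := zero_le_one.trans (one_le_freq k)
  have h := Real.lipschitzWith_sin.dist_le_mul (freq k * x) (freq k * y)
  simp only [Real.dist_eq, NNReal.coe_one, one_mul] at h
  rw [← mul_sub, abs_mul (freq k), abs_of_nonneg hμ] at h
  change |Real.sqrt 2 * Real.sin (freq k * x) - Real.sqrt 2 * Real.sin (freq k * y)| ≤ _
  rw [← mul_sub, abs_mul, abs_of_nonneg (Real.sqrt_nonneg 2)]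
  exact mul_le_mul_of_nonneg_left h (Real.sqrt_nonneg 2)

lemma abs_sineEig_sub_le_rpow (k : ℕ) {δ : ℝ} (hδ : δ ≤ 1) (hδ0 : 0 ≤ δ) {x y : ℝ}
    (hx : x ∈ Icc (0:ℝ) 1) (hy : y ∈ Icc (0:ℝ) 1) :
    |sineEig k x - sineEig k y| ≤ Real.sqrt 2 * (freq k * |x - y| ^ δ) := by
  have hμ : 0 ≤ freq k := zero_le_one.trans (one_le_freq k)
  refine (abs_sineEig_sub_le k x y).trans ?_
  have h1 : |x - y| ≤ 1 := by
    rw [abs_le]; constructor <;> linarith [hx.1, hx.2, hy.1, hy.2]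
  have h2 : |x - y| ≤ |x - y| ^ δ := by
    rcases eq_or_lt_of_le hδ0 with h | h
    · rw [← h, Real.rpow_zero]; exact h1
    · exact Real.self_le_rpow_of_le_one (abs_nonneg _) h1 hδ
  gcongr

/-- A single coefficient is controlled by the `H^{-α/2}` norm, at the cost of `μ^{α/2} ≤ μ`. -/
lemma abs_fco_le {α : ℝ} (hα : α ≤ 2) {v : ℝ → ℝ} (hv : memH (-(α/2)) v) (k : ℕ) :
    |fco v k| ≤ freq k * hNorm (-(α/2)) v := by
  have h1 := one_le_freq k
  have hμ : 0 < freq k := zero_lt_one.trans_le h1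
  have hle : freq k ^ (2 * (-(α/2))) * fco v k ^ 2 ≤
      ∑' k : ℕ, (((k : ℝ) + 1) * Real.pi) ^ (2 * (-(α/2))) * fco v k ^ 2 :=
    hv.le_tsum k fun j _ => by positivity
  have hsq : freq k ^ (2 * (-(α/2))) * fco v k ^ 2 = (freq k ^ (-(α/2)) * |fco v k|) ^ 2 := by
    rw [mul_pow, sq_abs, ← Real.rpow_natCast (freq k ^ (-(α/2))) 2, ← Real.rpow_mul hμ.le]
    congr 2
    push_cast
    ring
  rw [hsq] at hle
  have h2 : freq k ^ (-(α/2)) * |fco v k| ≤ hNorm (-(α/2)) v := Real.le_sqrt_of_sq_le hle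
  have h3 : freq k ^ (-1 : ℝ) * |fco v k| ≤ hNorm (-(α/2)) v := by
    refine le_trans ?_ h2
    gcongr ?_ * _
    exact Real.rpow_le_rpow_of_exponent_le h1 (by linarith)
  rw [Real.rpow_neg_one, inv_mul_le_iff₀ hμ] at h3
  exact h3

/-- Interpolation of `1 - exp (-y) ≤ min 1 y ≤ y ^ γ`, with `y = l * (t - t₀)`. -/
lemma abs_exp_sub_exp_le {l t t₀ γ : ℝ} (hl : 0 ≤ l) (ht : t₀ ≤ t) (hγ0 : 0 ≤ γ) (hγ : γ ≤ 1) :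
    |Real.exp (-l * t) - Real.exp (-l * t₀)| ≤
      Real.exp (-l * t₀) * (l ^ γ * (t - t₀) ^ γ) := by
  have hs : 0 ≤ t - t₀ := sub_nonneg.2 ht
  have hy : 0 ≤ l * (t - t₀) := mul_nonneg hl hs
  rw [← Real.mul_rpow hl hs]
  set y := l * (t - t₀) with hydef
  have he : Real.exp (-l * t) = Real.exp (-l * t₀) * Real.exp (-y) := by
    rw [← Real.exp_add]; congr 1; rw [hydef]; ring
  have hle : Real.exp (-y) ≤ 1 := Real.exp_le_one_iff.2 (by linarith)
  have heq : Real.exp (-l * t) - Real.exp (-l * t₀) =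
      -(Real.exp (-l * t₀) * (1 - Real.exp (-y))) := by rw [he]; ring
  rw [heq, abs_neg, abs_of_nonneg (mul_nonneg (Real.exp_pos _).le (by linarith))]
  refine mul_le_mul_of_nonneg_left ?_ (Real.exp_pos _).le
  rcases le_total y 1 with h | h
  · have h1 : y ≤ y ^ γ := by
      rcases eq_or_lt_of_le hγ0 with h0 | h0
      · rw [← h0, Real.rpow_zero]; exact h
      · exact Real.self_le_rpow_of_le_one hy h hγ
    linarith [Real.add_one_le_exp (-y)]
  · linarith [Real.one_le_rpow h hγ0, Real.exp_pos (-y)]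

/-- The summable majorant `μ⁴ exp (-μ t₀)`, with `μ = freq k`. -/
def major (t₀ : ℝ) (k : ℕ) : ℝ := freq k ^ 4 * Real.exp (-freq k * t₀)

lemma major_pos (t₀ : ℝ) (k : ℕ) : 0 < major t₀ k := by
  have := zero_lt_one.trans_le (one_le_freq k)
  unfold major
  positivity

lemma summable_major {t₀ : ℝ} (ht₀ : 0 < t₀) : Summable (major t₀) := by
  have h := (summable_nat_add_iff 1).2
    (Real.summable_pow_mul_exp_neg_nat_mul 4 (mul_pos Real.pi_pos ht₀))
  refine (h.mul_left (Real.pi ^ 4)).congr fun k => ?_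
  unfold major freq
  rw [mul_pow]
  push_cast
  have : -(Real.pi * t₀) * ((k : ℝ) + 1) = -(((k : ℝ) + 1) * Real.pi) * t₀ := by ring
  rw [this]
  ring

lemma freq_le_rpow {α : ℝ} (hα : 1 < α) (k : ℕ) : freq k ≤ freq k ^ α :=
  Real.self_le_rpow_of_one_le (one_le_freq k) hα.le

/-- Termwise estimate; the extra factor `freq k` on the left absorbs the Lipschitz constant of
`sineEig k`. -/
lemma abs_coeff_le {α t t₀ γ : ℝ} (hα : α ∈ Ioc (1:ℝ) 2) (ht₀ : 0 < t₀) (ht : t₀ ≤ t)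
    (hγ0 : 0 ≤ γ) (hγ : γ ≤ 1) {v : ℝ → ℝ} (hv : memH (-(α/2)) v) (k : ℕ) :
    |(Real.exp (-freq k ^ α * t) - Real.exp (-freq k ^ α * t₀)) * fco v k| * freq k ≤
      major t₀ k * ((t - t₀) ^ γ * hNorm (-(α/2)) v) := by
  have h1 := one_le_freq k
  have hμ : 0 < freq k := zero_lt_one.trans_le h1
  have hl : freq k ≤ freq k ^ α := freq_le_rpow hα.1 k
  have hlγ : (freq k ^ α) ^ γ ≤ freq k ^ 2 := by
    calc (freq k ^ α) ^ γ ≤ (freq k ^ α) ^ (1:ℝ) :=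
          Real.rpow_le_rpow_of_exponent_le (h1.trans hl) hγ
      _ = freq k ^ α := Real.rpow_one _
      _ ≤ freq k ^ (2:ℝ) := Real.rpow_le_rpow_of_exponent_le h1 hα.2
      _ = freq k ^ 2 := Real.rpow_two _
  have hs : 0 ≤ (t - t₀) ^ γ := Real.rpow_nonneg (sub_nonneg.2 ht) _
  have hN : 0 ≤ hNorm (-(α/2)) v := Real.sqrt_nonneg _
  have hE : Real.exp (-freq k ^ α * t₀) ≤ Real.exp (-freq k * t₀) := by
    apply Real.exp_le_exp.2
    nlinarith
  rw [abs_mul]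
  calc _ ≤ (Real.exp (-freq k ^ α * t₀) * ((freq k ^ α) ^ γ * (t - t₀) ^ γ)) *
        (freq k * hNorm (-(α/2)) v) * freq k := by
        gcongr
        · exact abs_exp_sub_exp_le (hμ.le.trans hl) ht hγ0 hγ
        · exact abs_fco_le hα.2 hv k
    _ ≤ (Real.exp (-freq k * t₀) * (freq k ^ 2 * (t - t₀) ^ γ)) *
        (freq k * hNorm (-(α/2)) v) * freq k := by
        gcongr
    _ = _ := by unfold major; ring

lemma summable_heat {α t t₀ : ℝ} (hα : α ∈ Ioc (1:ℝ) 2) (ht₀ : 0 < t₀) (ht : t₀ ≤ t)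
    {v : ℝ → ℝ} (hv : memH (-(α/2)) v) (x : ℝ) :
    Summable fun k : ℕ => Real.exp (-freq k ^ α * t) * fco v k * sineEig k x := by
  refine Summable.of_norm_bounded
    ((summable_major ht₀).mul_right (hNorm (-(α/2)) v * Real.sqrt 2)) fun k => ?_
  have h1 := one_le_freq k
  have hμ : 0 < freq k := zero_lt_one.trans_le h1
  have hl : freq k ≤ freq k ^ α := freq_le_rpow hα.1 k
  have hN : 0 ≤ hNorm (-(α/2)) v := Real.sqrt_nonneg _
  have hE : Real.exp (-freq k ^ α * t) ≤ Real.exp (-freq k * t₀) := by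
    apply Real.exp_le_exp.2
    have := mul_le_mul hl ht ht₀.le (hμ.le.trans hl)
    linarith
  have hp : freq k ≤ freq k ^ 4 := le_self_pow₀ h1 (by norm_num)
  rw [Real.norm_eq_abs, abs_mul, abs_mul, Real.abs_exp]
  calc _ ≤ Real.exp (-freq k * t₀) * (freq k * hNorm (-(α/2)) v) * Real.sqrt 2 := by
        gcongr
        · exact abs_fco_le hα.2 hv k
        · exact abs_sineEig_le k x
    _ ≤ Real.exp (-freq k * t₀) * (freq k ^ 4 * hNorm (-(α/2)) v) * Real.sqrt 2 := by gcongr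
    _ = _ := by unfold major; ring

/-- Pairing the coefficients `a` with test values `g` growing at most like `freq k * B`. This
serves both the supremum (`g k = sineEig k x`) and the Hölder quotient
(`g k = sineEig k x - sineEig k y`). -/
lemma abs_tsum_le {a g m : ℕ → ℝ} {A B : ℝ} (hm : Summable m) (hB : 0 ≤ B)
    (ha : ∀ k, |a k| * freq k ≤ m k * A) (hg : ∀ k, |g k| ≤ freq k * B) :
    |∑' k, a k * g k| ≤ (∑' k, m k) * A * B := by
  have hs : HasSum (fun k => m k * (A * B)) ((∑' k, m k) * (A * B)) := hm.hasSum.mul_right _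
  rw [mul_assoc, ← Real.norm_eq_abs]
  refine tsum_of_norm_bounded hs fun k => ?_
  rw [Real.norm_eq_abs, abs_mul]
  calc |a k| * |g k| ≤ |a k| * (freq k * B) := by gcongr; exact hg k
    _ = (|a k| * freq k) * B := by ring
    _ ≤ (m k * A) * B := mul_le_mul_of_nonneg_right (ha k) hB
    _ = _ := by ring

/-- time-Hölder estimate at a fixed time `t₀`. -/
theorem stmt7 (T α δ t₀ ε : ℝ) (hT : 0 < T) (hα : α ∈ Set.Ioc (1:ℝ) 2)
    (hδ : δ ∈ Set.Ico (0:ℝ) ((α - 1)/2)) (ht₀ : t₀ ∈ Set.Ioc (0:ℝ) T)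
    (hε : ε ∈ Set.Ioo (0:ℝ) ((α - 1 - 2*δ)/(2*α))) :
    ∃ C > 0, ∀ t ∈ Set.Icc t₀ T, ∀ v : ℝ → ℝ, memH (-(α/2)) v →
      cNorm δ (fun x => heatSG α t v x - heatSG α t₀ v x)
        ≤ C * |t - t₀| ^ ((α - 1 - 2*δ)/(2*α) - ε) * hNorm (-(α/2)) v := by
  have hδ0 : 0 ≤ δ := hδ.1
  have hδ1 : δ ≤ 1 := by linarith [hδ.2, hα.2]
  have hγ0 : 0 ≤ (α - 1 - 2*δ)/(2*α) - ε := by linarith [hε.2]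
  have hγ1 : (α - 1 - 2*δ)/(2*α) - ε ≤ 1 := by
    have : (α - 1 - 2*δ)/(2*α) ≤ 1 := by
      rw [div_le_one (by linarith [hα.1])]
      linarith [hα.1]
    linarith [hε.1]
  generalize (α - 1 - 2*δ)/(2*α) - ε = γ at hγ0 hγ1 ⊢
  have hK : 0 < ∑' k, major t₀ k :=
    (summable_major ht₀.1).tsum_pos (fun k => (major_pos t₀ k).le) 0 (major_pos t₀ 0)
  have h2 : 0 < Real.sqrt 2 := by positivity
  refine ⟨2 * (Real.sqrt 2 * ∑' k, major t₀ k), by positivity, fun t ht v hv => ?_⟩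
  rw [abs_of_nonneg (sub_nonneg.2 ht.1)]
  have hA : 0 ≤ (t - t₀) ^ γ * hNorm (-(α/2)) v :=
    mul_nonneg (Real.rpow_nonneg (sub_nonneg.2 ht.1) _) (Real.sqrt_nonneg _)
  set a : ℕ → ℝ := fun k =>
    (Real.exp (-freq k ^ α * t) - Real.exp (-freq k ^ α * t₀)) * fco v k with ha
  have hsum : ∀ x, Summable fun k => a k * sineEig k x := fun x =>
    ((summable_heat hα ht₀.1 ht.1 hv x).sub (summable_heat hα ht₀.1 le_rfl hv x)).congr
      fun k => by rw [ha]; ring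
  have hdiff : ∀ x, heatSG α t v x - heatSG α t₀ v x = ∑' k, a k * sineEig k x := fun x => by
    refine ((summable_heat hα ht₀.1 ht.1 hv x).tsum_sub
      (summable_heat hα ht₀.1 le_rfl hv x)).symm.trans (tsum_congr fun k => ?_)
    rw [ha]; ring
  have hcoeff : ∀ k, |a k| * freq k ≤ major t₀ k * ((t - t₀) ^ γ * hNorm (-(α/2)) v) :=
    fun k => abs_coeff_le hα ht₀.1 ht.1 hγ0 hγ1 hv k
  have hmaj := summable_major ht₀.1
  simp only [hdiff]
  have hsup : supIcc (fun x => ∑' k, a k * sineEig k x) ≤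
      (∑' k, major t₀ k) * ((t - t₀) ^ γ * hNorm (-(α/2)) v) * Real.sqrt 2 := by
    refine Real.iSup_le (fun x => ?_) (by positivity)
    refine abs_tsum_le hmaj h2.le hcoeff fun k => (abs_sineEig_le k _).trans ?_
    exact le_mul_of_one_le_left h2.le (one_le_freq k)
  have hhol : holderSemi δ (fun x => ∑' k, a k * sineEig k x) ≤
      (∑' k, major t₀ k) * ((t - t₀) ^ γ * hNorm (-(α/2)) v) * Real.sqrt 2 := by
    refine Real.iSup_le (fun p => ?_) (by positivity)
    refine div_le_of_le_mul₀ (by positivity) (by positivity) ?_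
    rw [← (hsum p.1).tsum_sub (hsum p.2), mul_assoc _ (Real.sqrt 2)]
    simp only [← mul_sub]
    refine abs_tsum_le hmaj (by positivity) hcoeff fun k => ?_
    refine (abs_sineEig_sub_le_rpow k hδ1 hδ0 p.1.2 p.2.2).trans_eq ?_
    ring
  have hpos : 0 ≤ (∑' k, major t₀ k) * ((t - t₀) ^ γ * hNorm (-(α/2)) v) * Real.sqrt 2 := by
    positivity
  unfold cNorm
  split_ifs <;> linarith
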